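/- arXiv:1410.3115 — 3 statements merged into one kernel-verified Lean document; each statement's English description precedes it below -/
import Mathlib

section
/- Let x : [0,1] → ℝ, let 0 ≤ s < t ≤ 1, and let β ≥ 0 be such that H(x(u), x(v), x(w)) ≤ β for all s ≤ u < v < w ≤ t. Suppose η > 2β. Then for every integer N ≥ 1 and every choice of points s ≤ t₁ < t₂ ≤ t₃ < t₄ ≤ … ≤ t_{2N−1} < t_{2N} ≤ t satisfying |x(t_{2k}) − x(t_{2k−1})| > η for all k = 1, …, N, one has N ≤ (|x(t) − x(s)| + β)/(η − β). In particular the number of η-oscillations of x in [s,t] is at most (|x(t) − x(s)| + β)/(η − β). -/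
/-- `Hdist a b c` is the distance from `b` to the closed interval with endpoints `a` and `c`. -/
noncomputable def Hdist (a b c : ℝ) : ℝ :=
  max (min a c - min (min a c) b) (max (max a c) b - max a c)

/-!
Once `x` has risen by more than `β`, it never again falls more than `β` below the level reached;
so an oscillation larger than `2β` cannot be followed by one in the opposite direction. All
oscillations therefore have the same sign, say upward, and each gains at least `η` while at most
`β` is lost before the first, between consecutive ones, and after the last:
`x t - x s ≥ N η - (N + 1) β`. Replacing `x` by `-x` covers the downward case.
-/

section AlmostBetween

variable {ι α : Type*} [LinearOrder ι] [AddCommGroup α] [LinearOrder α]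

/-- On `S`, the value of `x` at an intermediate time lies within `β` of the interval spanned by
its values at the two outer times. For `β = 0` this says that `x` is monotone or antitone on `S`.
The three times may coincide, which forces `0 ≤ β` as soon as `S` is nonempty. -/
def AlmostBetweenOn (x : ι → α) (β : α) (S : Set ι) : Prop :=
  ∀ ⦃u⦄, u ∈ S → ∀ ⦃v⦄, v ∈ S → ∀ ⦃w⦄, w ∈ S → u ≤ v → v ≤ w →
    x v ∈ Set.Icc (min (x u) (x w) - β) (max (x u) (x w) + β)

namespace AlmostBetweenOn

variable [IsOrderedAddMonoid α] {x : ι → α} {β η : α} {S : Set ι} {r s t v w z : ι}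
  {n : ℕ} {u : ℕ → ι}

theorem neg (hx : AlmostBetweenOn x β S) : AlmostBetweenOn (-x) β S := by
  intro u hu v hv w hw huv hvw
  obtain ⟨hmin, hmax⟩ := hx hu hv hw huv hvw
  simp only [Pi.neg_apply, min_neg_neg, max_neg_neg, Set.mem_Icc]
  exact ⟨by grind, by grind⟩

theorem nonneg (hx : AlmostBetweenOn x β S) (hs : s ∈ S) : 0 ≤ β := by
  simpa using (hx hs hs hs le_rfl le_rfl).2

theorem le_add_of_prior_rise (hx : AlmostBetweenOn x β S) (hr : r ∈ S) (hv : v ∈ S) (hw : w ∈ S)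
    (hrv : r ≤ v) (hvw : v ≤ w) (hrise : β < x v - x r) : x v ≤ x w + β := by
  have hmax : x v ≤ max (x r) (x w) + β := (hx hr hv hw hrv hvw).2
  grind

theorem le_add_of_later_rise (hx : AlmostBetweenOn x β S) (hr : r ∈ S) (hv : v ∈ S) (hw : w ∈ S)
    (hrv : r ≤ v) (hvw : v ≤ w) (hrise : β < x w - x v) : x r ≤ x v + β := by
  have hmin : min (x r) (x w) - β ≤ x v := (hx hr hv hw hrv hvw).1
  grind

theorem lt_sub_of_prior_rise (hx : AlmostBetweenOn x β S) (hr : r ∈ S) (hv : v ∈ S)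
    (hw : w ∈ S) (hz : z ∈ S) (hrv : r ≤ v) (hvw : v ≤ w) (hwz : w ≤ z) (hη : 2 • β ≤ η)
    (hrise : β < x v - x r) (hosc : η < |x z - x w|) : η < x z - x w := by
  have hβ : 0 ≤ β := hx.nonneg hr
  have hvz : x v ≤ x z + β := hx.le_add_of_prior_rise hr hv hz hrv (hvw.trans hwz) hrise
  have hmax : x w ≤ max (x v) (x z) + β := (hx hv hw hz hvw hwz).2
  have hdrop : x w - x z ≤ 2 • β := by grind
  exact (lt_abs.1 hosc).resolve_right (by grind)

theorem lt_sub_of_first_lt_sub (hx : AlmostBetweenOn x β S) (hη : 2 • β ≤ η)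
    (hu : MonotoneOn u (Set.Icc 1 (2 * n))) (huS : Set.MapsTo u (Set.Icc 1 (2 * n)) S)
    (hosc : ∀ k < n, η < |x (u (2 * k + 2)) - x (u (2 * k + 1))|)
    (hfirst : η < x (u 2) - x (u 1)) {k : ℕ} (hk : k < n) :
    η < x (u (2 * k + 2)) - x (u (2 * k + 1)) := by
  have hmem {i : ℕ} (hi : 1 ≤ i ∧ i ≤ 2 * n) : u i ∈ S := huS hi
  have hmono {i j : ℕ} (hij : 1 ≤ i ∧ i ≤ j ∧ j ≤ 2 * n) : u i ≤ u j :=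
    hu ⟨hij.1, hij.2.1.trans hij.2.2⟩ ⟨hij.1.trans hij.2.1, hij.2.2⟩ hij.2.1
  obtain rfl | hk₀ := k.eq_zero_or_pos
  · exact hfirst
  have hu₁ : u 1 ∈ S := hmem (by lia)
  have hβ : 0 ≤ β := hx.nonneg hu₁
  have hrise : β < x (u 2) - x (u 1) := by grind
  exact hx.lt_sub_of_prior_rise hu₁ (hmem (by lia)) (hmem (by lia)) (hmem (by lia))
    (hmono (by lia)) (hmono (by lia)) (hmono (by lia)) hη hrise (hosc k hk)

theorem add_nsmul_le_of_forall_lt_sub (hx : AlmostBetweenOn x β S) (hη : β ≤ η) (hs : s ∈ S)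
    (hsu : s ≤ u 1) (hu : MonotoneOn u (Set.Icc 1 (2 * n)))
    (huS : Set.MapsTo u (Set.Icc 1 (2 * n)) S)
    (hrise : ∀ k < n, η < x (u (2 * k + 2)) - x (u (2 * k + 1))) {k : ℕ} (hk : k < n) :
    x s + k • (η - β) ≤ x (u (2 * k + 1)) + β := by
  have hmem {i : ℕ} (hi : 1 ≤ i ∧ i ≤ 2 * n) : u i ∈ S := huS hi
  have hmono {i j : ℕ} (hij : 1 ≤ i ∧ i ≤ j ∧ j ≤ 2 * n) : u i ≤ u j :=
    hu ⟨hij.1, hij.2.1.trans hij.2.2⟩ ⟨hij.1.trans hij.2.1, hij.2.2⟩ hij.2.1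
  induction k with
  | zero =>
    simpa using hx.le_add_of_later_rise hs (hmem (by lia)) (hmem (by lia)) hsu (hmono (by lia))
      (hη.trans_lt (hrise 0 hk))
  | succ k ih =>
    have hgain := hrise k (by lia)
    have hloss : x (u (2 * k + 2)) ≤ x (u (2 * k + 3)) + β :=
      hx.le_add_of_prior_rise (hmem (by lia)) (hmem (by lia)) (hmem (by lia))
        (hmono (by lia)) (hmono (by lia)) (hη.trans_lt hgain)
    calc x s + (k + 1) • (η - β) = (x s + k • (η - β)) + (η - β) := by rw [succ_nsmul, add_assoc]
      _ ≤ x (u (2 * k + 1)) + β + (η - β) := add_le_add_left (ih (by lia)) _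
      _ = x (u (2 * k + 1)) + η := by abel
      _ ≤ x (u (2 * k + 2)) := by grind
      _ ≤ x (u (2 * (k + 1) + 1)) + β := hloss

theorem nsmul_le_sub_add_of_forall_lt_sub (hx : AlmostBetweenOn x β S) (hη : β ≤ η) (hs : s ∈ S)
    (ht : t ∈ S) (hn : 0 < n) (hsu : s ≤ u 1) (hut : u (2 * n) ≤ t)
    (hu : MonotoneOn u (Set.Icc 1 (2 * n))) (huS : Set.MapsTo u (Set.Icc 1 (2 * n)) S)
    (hrise : ∀ k < n, η < x (u (2 * k + 2)) - x (u (2 * k + 1))) :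
    n • (η - β) ≤ x t - x s + β := by
  obtain ⟨m, rfl⟩ := Nat.exists_add_one_eq.2 hn
  have hbefore := hx.add_nsmul_le_of_forall_lt_sub hη hs hsu hu huS hrise m.lt_add_one
  have hgain := hrise m m.lt_add_one
  have hafter : x (u (2 * m + 2)) ≤ x t + β :=
    hx.le_add_of_prior_rise (huS ⟨by lia, by lia⟩) (huS ⟨by lia, by lia⟩) ht
      (hu ⟨by lia, by lia⟩ ⟨by lia, by lia⟩ (by lia)) hut (hη.trans_lt hgain)
  calc (m + 1) • (η - β) = m • (η - β) + (η - β) := succ_nsmul _ _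
    _ ≤ x (u (2 * m + 1)) + η - x s := by grind
    _ ≤ x (u (2 * m + 2)) - x s := by grind
    _ ≤ x t - x s + β := by grind

theorem nsmul_le_abs_sub_add (hx : AlmostBetweenOn x β S) (hη : 2 • β ≤ η) (hs : s ∈ S)
    (ht : t ∈ S) (hsu : s ≤ u 1) (hut : u (2 * n) ≤ t)
    (hu : MonotoneOn u (Set.Icc 1 (2 * n))) (huS : Set.MapsTo u (Set.Icc 1 (2 * n)) S)
    (hosc : ∀ k < n, η < |x (u (2 * k + 2)) - x (u (2 * k + 1))|) :
    n • (η - β) ≤ |x t - x s| + β := by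
  have hβ : 0 ≤ β := hx.nonneg hs
  have hβη : β ≤ η := by grind
  obtain rfl | hn := n.eq_zero_or_pos
  · simpa using add_nonneg (abs_nonneg (x t - x s)) hβ
  rcases lt_abs.1 (hosc 0 hn) with hup | hdown
  · have hrise k (hk : k < n) := hx.lt_sub_of_first_lt_sub hη hu huS hosc hup hk
    calc n • (η - β) ≤ x t - x s + β :=
          hx.nsmul_le_sub_add_of_forall_lt_sub hβη hs ht hn hsu hut hu huS hrise
      _ ≤ |x t - x s| + β := by gcongr; exact le_abs_self _
  · have hosc' : ∀ k < n, η < |(-x) (u (2 * k + 2)) - (-x) (u (2 * k + 1))| := by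
      simpa only [Pi.neg_apply, neg_sub_neg, abs_sub_comm] using hosc
    have hdown' : η < (-x) (u 2) - (-x) (u 1) := by
      simpa only [Pi.neg_apply, neg_sub_neg, neg_sub] using hdown
    have hrise k (hk : k < n) := hx.neg.lt_sub_of_first_lt_sub hη hu huS hosc' hdown' hk
    calc n • (η - β) ≤ -x t - -x s + β :=
          hx.neg.nsmul_le_sub_add_of_forall_lt_sub hβη hs ht hn hsu hut hu huS hrise
      _ ≤ |x t - x s| + β := by
          rw [neg_sub_neg, abs_sub_comm]
          gcongr
          exact le_abs_self _

end AlmostBetweenOn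

end AlmostBetween

theorem Hdist_le_iff {a b c β : ℝ} (hβ : 0 ≤ β) :
    Hdist a b c ≤ β ↔ b ∈ Set.Icc (min a c - β) (max a c + β) := by
  have hbelow : min a c - min (min a c) b ≤ β ↔ min a c - β ≤ b := by
    rw [sub_le_comm, le_min_iff, and_iff_right (sub_le_self _ hβ)]
  have habove : max (max a c) b - max a c ≤ β ↔ b ≤ max a c + β := by
    rw [sub_le_iff_le_add', max_le_iff, and_iff_right (le_add_of_nonneg_right hβ)]
  rw [Hdist, max_le_iff, hbelow, habove, Set.mem_Icc]

theorem almostBetweenOn_of_Hdist_le {ι : Type*} [LinearOrder ι] {x : ι → ℝ} {S : Set ι} {β : ℝ}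
    (hβ : 0 ≤ β)
    (hH : ∀ u ∈ S, ∀ v ∈ S, ∀ w ∈ S, u < v → v < w → Hdist (x u) (x v) (x w) ≤ β) :
    AlmostBetweenOn x β S := by
  intro u hu v hv w hw huv hvw
  obtain rfl | huv := huv.eq_or_lt
  · exact ⟨by grind, by grind⟩
  obtain rfl | hvw := hvw.eq_or_lt
  · exact ⟨by grind, by grind⟩
  exact (Hdist_le_iff hβ).1 (hH u hu v hv w hw huv hvw)

theorem monotoneOn_Icc_of_alternating_le {ι : Type*} [Preorder ι] {u : ℕ → ι} {n : ℕ}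
    (hodd : ∀ k, 1 ≤ k → k ≤ n → u (2 * k - 1) ≤ u (2 * k))
    (heven : ∀ k, 1 ≤ k → k < n → u (2 * k) ≤ u (2 * k + 1)) :
    MonotoneOn u (Set.Icc 1 (2 * n)) := by
  refine monotoneOn_of_le_add_one Set.ordConnected_Icc fun i _ hi hi' => ?_
  simp only [Set.mem_Icc] at hi hi'
  rcases i.even_or_odd' with ⟨k, rfl | rfl⟩
  · exact heven k (by lia) (by lia)
  · exact hodd (k + 1) (by lia) (by lia)

theorem stmt_2_general {ι : Type*} [LinearOrder ι] (x : ι → ℝ) (s t : ι) (β η : ℝ)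
    (hst : s ≤ t) (hβ : 0 ≤ β)
    (hH : ∀ u v w : ι, s ≤ u → u < v → v < w → w ≤ t → Hdist (x u) (x v) (x w) ≤ β)
    (hη : 2 * β < η) (N : ℕ) (u : ℕ → ι) (hs1 : s ≤ u 1) (h2N : u (2 * N) ≤ t)
    (hu : MonotoneOn u (Set.Icc 1 (2 * N)))
    (hosc : ∀ k, 1 ≤ k → k ≤ N → η < |x (u (2 * k)) - x (u (2 * k - 1))|) :
    (N : ℝ) ≤ (|x t - x s| + β) / (η - β) := by
  have hx : AlmostBetweenOn x β (Set.Icc s t) := almostBetweenOn_of_Hdist_le hβ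
    fun u hu v _ w hw huv hvw => hH u v w hu.1 huv hvw hw.2
  have huS : Set.MapsTo u (Set.Icc 1 (2 * N)) (Set.Icc s t) := fun i hi =>
    have hN : 1 ≤ 2 * N := hi.1.trans hi.2
    ⟨hs1.trans (hu ⟨le_rfl, hN⟩ hi hi.1), (hu hi ⟨hN, le_rfl⟩ hi.2).trans h2N⟩
  have hbound : N • (η - β) ≤ |x t - x s| + β :=
    hx.nsmul_le_abs_sub_add (by simpa using hη.le) (Set.left_mem_Icc.2 hst)
      (Set.right_mem_Icc.2 hst) hs1 h2N hu huS fun k hk => hosc (k + 1) (by lia) hk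
  rwa [le_div_iff₀ (by linarith), ← nsmul_eq_mul]

theorem stmt_2 (x : ℝ → ℝ) (s t β η : ℝ)
    (h0 : 0 ≤ s) (hst : s < t) (ht : t ≤ 1) (hβ : 0 ≤ β)
    (hH : ∀ u v w : ℝ, s ≤ u → u < v → v < w → w ≤ t → Hdist (x u) (x v) (x w) ≤ β)
    (hη : 2 * β < η)
    (N : ℕ) (hN : 1 ≤ N) (u : ℕ → ℝ)
    (hs1 : s ≤ u 1)
    (h2N : u (2 * N) ≤ t)
    (hlt : ∀ k, 1 ≤ k → k ≤ N → u (2 * k - 1) < u (2 * k))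
    (hle : ∀ k, 1 ≤ k → k < N → u (2 * k) ≤ u (2 * k + 1))
    (hosc : ∀ k, 1 ≤ k → k ≤ N → η < |x (u (2 * k)) - x (u (2 * k - 1))|) :
    (N : ℝ) ≤ (|x t - x s| + β) / (η - β) :=
  stmt_2_general x s t β η hst.le hβ hH hη N u hs1 h2N
    (monotoneOn_Icc_of_alternating_le (fun k hk hkN => (hlt k hk hkN).le) hle) hosc
end

section
/- Let {a_{n,j} : 1 ≤ j ≤ n, n ∈ ℕ} be an array of real numbers such that max_{1 ≤ j ≤ n} |a_{n,j}| → 0 as n → ∞. Then there exists a sequence of positive integers j_n with j_n ≤ n, j_n → ∞ and j_n/n → 0 such that Σ_{j=1}^{j_n} |a_{n,j}| → 0 as n → ∞. -/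
open Filter Topology

/-!
Every column of the array tends to `0`. Hence, for fixed `k`, both `(k + 1) / n` and the sum of the
first `k + 1` norms in row `n` tend to `0` as `n → ∞`. A diagonal argument lets `k` grow with `n`,
slowly enough that both limits survive.
-/

section Diagonal

variable {α β : Type*} {l : Filter α} {u : α → ℕ}

theorem exists_le_tendsto_atTop_eventually {p : ℕ → α → Prop} (hu : Tendsto u l atTop)
    (hp : ∀ k, ∀ᶠ x in l, p k x) :
    ∃ k : α → ℕ, (∀ x, k x ≤ u x) ∧ Tendsto k l atTop ∧ ∀ᶠ x in l, p (k x) x := by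
  classical
  let k : α → ℕ := fun x ↦ Nat.findGreatest (p · x) (u x)
  have hk : Tendsto k l atTop := by
    refine tendsto_atTop.2 fun m ↦ ?_
    filter_upwards [hu.eventually_ge_atTop m, hp m] with x hmu hpm
    exact Nat.le_findGreatest hmu hpm
  refine ⟨k, fun x ↦ Nat.findGreatest_le _, hk, ?_⟩
  filter_upwards [hk.eventually_ne_atTop 0] with x hkx
  exact Nat.findGreatest_of_ne_zero rfl hkx

theorem exists_le_tendsto_atTop_tendsto_diagonal {l' : Filter β} [l'.IsCountablyGenerated]
    {f : ℕ → α → β} (hu : Tendsto u l atTop) (hf : ∀ k, Tendsto (f k) l l') :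
    ∃ k : α → ℕ, (∀ x, k x ≤ u x) ∧ Tendsto k l atTop ∧
      Tendsto (fun x ↦ f (k x) x) l l' := by
  obtain ⟨s, hs⟩ := l'.exists_antitone_basis
  obtain ⟨k, hku, hk, hmem⟩ := exists_le_tendsto_atTop_eventually hu fun k ↦
    (hf k).eventually_mem (hs.mem k)
  refine ⟨k, hku, hk, hs.tendsto_right_iff.2 fun m _ ↦ ?_⟩
  filter_upwards [hmem, hk.eventually_ge_atTop m] with x hx hmk
  exact hs.antitone hmk hx

end Diagonal

theorem tendsto_column_zero_of_uniform_row {E : Type*} [SeminormedAddCommGroup E]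
    {a : ℕ → ℕ → E}
    (ha : ∀ ε > 0, ∃ N : ℕ, ∀ n ≥ N, ∀ j, 1 ≤ j → j ≤ n → ‖a n j‖ < ε) {j : ℕ} (hj : 1 ≤ j) :
    Tendsto (a · j) atTop (𝓝 0) := by
  refine NormedAddGroup.tendsto_nhds_zero.2 fun ε hε ↦ ?_
  obtain ⟨N, hN⟩ := ha ε hε
  filter_upwards [eventually_ge_atTop N, eventually_ge_atTop j] with n hNn hjn
  exact hN n hNn j hj hjn

theorem stmt_4_general {E : Type*} [SeminormedAddCommGroup E] (a : ℕ → ℕ → E)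
    (ha : ∀ j, 1 ≤ j → Tendsto (a · j) atTop (𝓝 0)) :
    ∃ jseq : ℕ → ℕ,
      (∀ n, 1 ≤ n → 1 ≤ jseq n ∧ jseq n ≤ n) ∧
      Tendsto jseq atTop atTop ∧
      Tendsto (fun n ↦ (jseq n : ℝ) / n) atTop (𝓝 0) ∧
      Tendsto (fun n ↦ ∑ j ∈ Finset.Icc 1 (jseq n), ‖a n j‖) atTop (𝓝 0) := by
  have hratio (k : ℕ) : Tendsto (fun n : ℕ ↦ ((k + 1 : ℕ) : ℝ) / n) atTop (𝓝 0) :=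
    tendsto_const_div_atTop_nhds_zero_nat _
  have hsum (k : ℕ) : Tendsto (fun n ↦ ∑ j ∈ Finset.Icc 1 (k + 1), ‖a n j‖) atTop (𝓝 0) := by
    simpa only [Finset.sum_const_zero] using tendsto_finsetSum (Finset.Icc 1 (k + 1))
      fun j hj ↦ tendsto_zero_iff_norm_tendsto_zero.1 (ha j (Finset.mem_Icc.1 hj).1)
  obtain ⟨k, hkn, hk, hdiag⟩ := exists_le_tendsto_atTop_tendsto_diagonal
    (tendsto_sub_atTop_nat 1) fun k ↦ (hratio k).prodMk (hsum k)
  have hbounds (n : ℕ) (hn : 1 ≤ n) : 1 ≤ k n + 1 ∧ k n + 1 ≤ n :=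
    ⟨Nat.le_add_left 1 (k n), Nat.add_le_of_le_sub hn (hkn n)⟩
  exact ⟨fun n ↦ k n + 1, hbounds, (tendsto_add_atTop_nat 1).comp hk, hdiag.fst, hdiag.snd⟩

theorem stmt_4 (a : ℕ → ℕ → ℝ)
    (hmax : ∀ ε > 0, ∃ N : ℕ, ∀ n ≥ N, ∀ j, 1 ≤ j → j ≤ n → |a n j| < ε) :
    ∃ jseq : ℕ → ℕ,
      (∀ n, 1 ≤ n → 1 ≤ jseq n ∧ jseq n ≤ n) ∧
      Tendsto jseq atTop atTop ∧
      Tendsto (fun n => (jseq n : ℝ) / n) atTop (nhds 0) ∧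
      Tendsto (fun n => ∑ j ∈ Finset.Icc 1 (jseq n), |a n j|) atTop (nhds 0) :=
  stmt_4_general a fun _ ↦ tendsto_column_zero_of_uniform_row hmax
end

section
/- Let Y be a real random variable with P(|Y| > x) = x^{−α} h(x) for all x > 0, where α ∈ (1,2) and h is slowly varying at infinity. Then E[|Y|] < ∞ and there exists x₀ > 0 (depending on the law of Y) such that for all x > 0: E[|Y| 1{|Y| > x}] ≤ E[|Y|]·1{x ≤ x₀} + (2α/(α−1)) x^{1−α} h(x). -/
open MeasureTheory Filter Topology

/-!
Karamata's argument on a geometric grid. Let `T` be the tail of `|Y|` and fix `l > 1`. On the slice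
`x < |Y| ≤ l x` the variable is at most `l x`, so this slice contributes at most
`l x (T x - T (l x))` to the truncated mean. If this quantity is dominated by the decrement
`V x - V (l x)` of a nonnegative function `V`, summing over the slices `l ^ n x < |Y| ≤ l ^ (n+1) x`
telescopes to the bound `V x`. For `V x = C x T x`, dividing by `x T x` and letting `x → ∞` reduces
the domination to `l + (C - 1) l ^ (1 - α) < C`. Both sides agree at `l = 1`, where the derivative
of the left-hand side is negative exactly when `C > α / (α - 1)`, so some `l > 1` works.
-/

section RegularVariation

/-- Regular variation at infinity with index `ρ`; index `0` is slow variation. Positivity of `f` is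
not part of the definition, but since `l ^ ρ ≠ 0` the limits force `f` to be eventually nonzero,
division by zero being zero. -/
def IsRegularlyVarying (f : ℝ → ℝ) (ρ : ℝ) : Prop :=
  ∀ l > 0, Tendsto (fun x ↦ f (l * x) / f x) atTop (𝓝 (l ^ ρ))

namespace IsRegularlyVarying

variable {f g : ℝ → ℝ} {ρ : ℝ}

lemma congr' (hf : IsRegularlyVarying f ρ) (hfg : f =ᶠ[atTop] g) : IsRegularlyVarying g ρ := by
  intro l hl
  refine (hf l hl).congr' ?_
  have hfg_mul : ∀ᶠ x in atTop, f (l * x) = g (l * x) :=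
    (tendsto_id.const_mul_atTop hl).eventually hfg
  filter_upwards [hfg, hfg_mul] with x hx hlx
  rw [hx, hlx]

lemma rpow_mul (hf : IsRegularlyVarying f ρ) (σ : ℝ) :
    IsRegularlyVarying (fun x ↦ x ^ σ * f x) (σ + ρ) := by
  intro l hl
  rw [Real.rpow_add hl]
  refine ((hf l hl).const_mul (l ^ σ)).congr' ?_
  filter_upwards [eventually_gt_atTop 0] with x hx
  rw [Real.mul_rpow hl.le hx.le, mul_assoc, mul_div_assoc, mul_div_mul_left _ _ (by positivity)]

lemma eventually_ne_zero (hf : IsRegularlyVarying f ρ) : ∀ᶠ x in atTop, f x ≠ 0 := by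
  have hlim : Tendsto (fun x ↦ f (1 * x) / f x) atTop (𝓝 1) := by
    simpa only [Real.one_rpow] using hf 1 one_pos
  filter_upwards [hlim.eventually_ne one_ne_zero] with x hx hfx
  exact hx (by rw [hfx, div_zero])

end IsRegularlyVarying

lemma exists_one_lt_add_mul_rpow_lt {α C : ℝ} (hα : 1 < α) (hC : α / (α - 1) < C) :
    ∃ l > 1, l + (C - 1) * (l * l ^ (-α)) < C := by
  let gap : ℝ → ℝ := fun l ↦ C - l - (C - 1) * l ^ (1 - α)
  have gap_deriv : HasDerivAt gap (-1 - (C - 1) * (1 - α)) 1 := by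
    have hrpow : HasDerivAt (fun l : ℝ ↦ l ^ (1 - α)) (1 - α) 1 := by
      simpa using Real.hasDerivAt_rpow_const (p := 1 - α) (Or.inl (one_ne_zero (α := ℝ)))
    exact ((hasDerivAt_id 1).const_sub C).sub (hrpow.const_mul (C - 1))
  have gap_deriv_pos : 0 < deriv gap 1 := by
    rw [gap_deriv.deriv]
    linarith [(div_lt_iff₀ (sub_pos.2 hα)).1 hC]
  have gap_one : gap 1 = 0 := by simp [gap]
  have gap_sign : ∀ᶠ l in 𝓝[>] 1, SignType.sign (gap l) = SignType.sign (l - 1) :=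
    nhdsWithin_le_nhds (eventually_nhdsWithin_sign_eq_of_deriv_pos gap_deriv_pos gap_one)
  obtain ⟨l, hsign, hl⟩ := (gap_sign.and self_mem_nhdsWithin).exists
  have gap_pos : 0 < gap l := by
    rwa [sign_pos (sub_pos.2 hl), sign_eq_one_iff] at hsign
  have hrpow : l ^ (1 - α) = l * l ^ (-α) := by
    rw [sub_eq_add_neg, Real.rpow_add (one_pos.trans hl), Real.rpow_one]
  refine ⟨l, hl, ?_⟩
  rw [← hrpow]
  linarith

lemma IsRegularlyVarying.exists_geometric_decrement_le {T : ℝ → ℝ} {α C : ℝ} (hα : 1 < α)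
    (hC : α / (α - 1) < C) (hT : IsRegularlyVarying T (-α)) (hT₀ : ∀ᶠ x in atTop, 0 ≤ T x) :
    ∃ l > 1, ∀ᶠ x in atTop,
      l * x * (T x - T (l * x)) + C * (l * x) * T (l * x) ≤ C * x * T x := by
  obtain ⟨l, hl, hlC⟩ := exists_one_lt_add_mul_rpow_lt hα hC
  have hlim : Tendsto (fun x ↦ l + (C - 1) * (l * (T (l * x) / T x))) atTop
      (𝓝 (l + (C - 1) * (l * l ^ (-α)))) :=
    (((hT l (by linarith)).const_mul l).const_mul (C - 1)).const_add l
  refine ⟨l, hl, ?_⟩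
  filter_upwards [hlim.eventually_le_const hlC, hT.eventually_ne_zero, hT₀,
    eventually_ge_atTop 0] with x hratio hTx_ne hTx hx
  calc l * x * (T x - T (l * x)) + C * (l * x) * T (l * x)
      = (l + (C - 1) * (l * (T (l * x) / T x))) * (x * T x) := by field_simp; ring
    _ ≤ C * (x * T x) := mul_le_mul_of_nonneg_right hratio (mul_nonneg hx hTx)
    _ = C * x * T x := (mul_assoc ..).symm

end RegularVariation

section TruncatedMean

variable {Ω : Type*} [MeasurableSpace Ω] {μ : Measure Ω} [IsFiniteMeasure μ] {f : Ω → ℝ}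

lemma setLIntegral_slice_le (hf : AEMeasurable f μ) {a b : ℝ} (hab : a ≤ b) :
    ∫⁻ ω in {ω | a < f ω ∧ f ω ≤ b}, ENNReal.ofReal (f ω) ∂μ ≤
      ENNReal.ofReal (b * (μ.real {ω | a < f ω} - μ.real {ω | b < f ω})) := by
  have hslice : μ.real {ω | a < f ω ∧ f ω ≤ b} =
      μ.real {ω | a < f ω} - μ.real {ω | b < f ω} := by
    have hdiff : {ω | a < f ω ∧ f ω ≤ b} = {ω | a < f ω} \ {ω | b < f ω} := by
      ext ω
      simp
    have hsub : {ω | b < f ω} ⊆ {ω | a < f ω} := fun _ hω ↦ hab.trans_lt hω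
    have hmeas : NullMeasurableSet {ω | b < f ω} μ := nullMeasurableSet_lt aemeasurable_const hf
    rw [hdiff, eq_sub_iff_add_eq', ← measureReal_inter_add_sdiff₀ (s := {ω | a < f ω}) hmeas,
      Set.inter_eq_self_of_subset_right hsub]
  calc ∫⁻ ω in {ω | a < f ω ∧ f ω ≤ b}, ENNReal.ofReal (f ω) ∂μ
      ≤ ∫⁻ _ in {ω | a < f ω ∧ f ω ≤ b}, ENNReal.ofReal b ∂μ :=
        setLIntegral_mono measurable_const fun _ hω ↦ ENNReal.ofReal_le_ofReal hω.2
    _ = ENNReal.ofReal (b * (μ.real {ω | a < f ω} - μ.real {ω | b < f ω})) := by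
        rw [setLIntegral_const, ← hslice, ENNReal.ofReal_mul' measureReal_nonneg,
          ofReal_measureReal]

variable {V : ℝ → ℝ} {l x₀ : ℝ}

lemma setLIntegral_slice_pow_mul_le (hf : AEMeasurable f μ) (hl : 1 ≤ l) (hx₀ : 0 ≤ x₀)
    (hV₀ : ∀ x ≥ x₀, 0 ≤ V x)
    (hV : ∀ x ≥ x₀, l * x * (μ.real {ω | x < f ω} - μ.real {ω | l * x < f ω}) + V (l * x) ≤ V x)
    (n : ℕ) {x : ℝ} (hx : x₀ ≤ x) :
    ∫⁻ ω in {ω | x < f ω ∧ f ω ≤ l ^ n * x}, ENNReal.ofReal (f ω) ∂μ ≤ ENNReal.ofReal (V x) := by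
  induction n generalizing x with
  | zero =>
    have hempty : {ω | x < f ω ∧ f ω ≤ l ^ 0 * x} = ∅ := by
      ext ω
      simp
    rw [hempty, setLIntegral_empty]
    exact zero_le
  | succ n ih =>
    have hx_nonneg : 0 ≤ x := hx₀.trans hx
    have hx_le : x ≤ l * x := le_mul_of_one_le_left hx_nonneg hl
    have hsplit : {ω | x < f ω ∧ f ω ≤ l ^ (n + 1) * x} ⊆
        {ω | x < f ω ∧ f ω ≤ l * x} ∪ {ω | l * x < f ω ∧ f ω ≤ l ^ n * (l * x)} := by
      rintro ω ⟨hxω, hωx⟩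
      rw [pow_succ, mul_assoc] at hωx
      exact (le_or_gt (f ω) (l * x)).imp (⟨hxω, ·⟩) (⟨·, hωx⟩)
    have htail_anti : μ.real {ω | l * x < f ω} ≤ μ.real {ω | x < f ω} :=
      measureReal_mono fun ω hω ↦ hx_le.trans_lt hω
    have hslice_nonneg : 0 ≤ l * x * (μ.real {ω | x < f ω} - μ.real {ω | l * x < f ω}) :=
      mul_nonneg (hx_nonneg.trans hx_le) (sub_nonneg.2 htail_anti)
    calc ∫⁻ ω in {ω | x < f ω ∧ f ω ≤ l ^ (n + 1) * x}, ENNReal.ofReal (f ω) ∂μ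
        ≤ ∫⁻ ω in {ω | x < f ω ∧ f ω ≤ l * x}, ENNReal.ofReal (f ω) ∂μ +
            ∫⁻ ω in {ω | l * x < f ω ∧ f ω ≤ l ^ n * (l * x)}, ENNReal.ofReal (f ω) ∂μ :=
          (lintegral_mono_set hsplit).trans (lintegral_union_le _ _ _)
      _ ≤ ENNReal.ofReal (l * x * (μ.real {ω | x < f ω} - μ.real {ω | l * x < f ω})) +
            ENNReal.ofReal (V (l * x)) :=
          add_le_add (setLIntegral_slice_le hf hx_le) (ih (hx.trans hx_le))
      _ = ENNReal.ofReal
            (l * x * (μ.real {ω | x < f ω} - μ.real {ω | l * x < f ω}) + V (l * x)) :=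
          (ENNReal.ofReal_add hslice_nonneg (hV₀ _ (hx.trans hx_le))).symm
      _ ≤ ENNReal.ofReal (V x) := ENNReal.ofReal_le_ofReal (hV x hx)

lemma setLIntegral_tail_le_of_geometric_decrement_le (hf : AEMeasurable f μ) (hl : 1 < l)
    (hx₀ : 0 < x₀) (hV₀ : ∀ x ≥ x₀, 0 ≤ V x)
    (hV : ∀ x ≥ x₀, l * x * (μ.real {ω | x < f ω} - μ.real {ω | l * x < f ω}) + V (l * x) ≤ V x)
    {x : ℝ} (hx : x₀ ≤ x) :
    ∫⁻ ω in {ω | x < f ω}, ENNReal.ofReal (f ω) ∂μ ≤ ENNReal.ofReal (V x) := by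
  have hx_pos : 0 < x := hx₀.trans_le hx
  have hmono : Monotone fun n : ℕ ↦ {ω | x < f ω ∧ f ω ≤ l ^ n * x} := fun m n hmn ω hω ↦
    ⟨hω.1, hω.2.trans
      (mul_le_mul_of_nonneg_right (pow_le_pow_right₀ hl.le hmn) hx_pos.le)⟩
  have hcover : {ω | x < f ω} ⊆ ⋃ n : ℕ, {ω | x < f ω ∧ f ω ≤ l ^ n * x} := by
    intro ω hω
    obtain ⟨n, hn⟩ := pow_unbounded_of_one_lt (f ω / x) hl
    exact Set.mem_iUnion.2 ⟨n, hω, ((div_lt_iff₀ hx_pos).1 hn).le⟩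
  calc ∫⁻ ω in {ω | x < f ω}, ENNReal.ofReal (f ω) ∂μ
      ≤ ∫⁻ ω in ⋃ n : ℕ, {ω | x < f ω ∧ f ω ≤ l ^ n * x}, ENNReal.ofReal (f ω) ∂μ :=
        lintegral_mono_set hcover
    _ = ⨆ n : ℕ, ∫⁻ ω in {ω | x < f ω ∧ f ω ≤ l ^ n * x}, ENNReal.ofReal (f ω) ∂μ :=
        setLIntegral_iUnion_of_directed _ hmono.directed_le
    _ ≤ ENNReal.ofReal (V x) :=
        iSup_le fun n ↦ setLIntegral_slice_pow_mul_le hf hl.le hx₀.le hV₀ hV n hx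

theorem IsRegularlyVarying.eventually_setLIntegral_tail_le {α C : ℝ} (hα : 1 < α)
    (hC : α / (α - 1) < C) (hf : AEMeasurable f μ)
    (htail : IsRegularlyVarying (fun x ↦ μ.real {ω | x < f ω}) (-α)) :
    ∀ᶠ x in atTop, ∫⁻ ω in {ω | x < f ω}, ENNReal.ofReal (f ω) ∂μ ≤
      ENNReal.ofReal (C * x * μ.real {ω | x < f ω}) := by
  have hC_pos : 0 < C := (div_pos (by linarith) (sub_pos.2 hα)).trans hC
  obtain ⟨l, hl, hdecr⟩ :=
    htail.exists_geometric_decrement_le hα hC (.of_forall fun _ ↦ measureReal_nonneg)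
  obtain ⟨x₀, hx₀, hdecr⟩ := (atTop_basis' 1).eventually_iff.1 hdecr
  have hx₀_pos : 0 < x₀ := one_pos.trans_le hx₀
  filter_upwards [eventually_ge_atTop x₀] with x hx
  refine setLIntegral_tail_le_of_geometric_decrement_le
    (V := fun y ↦ C * y * μ.real {ω | y < f ω}) hf hl hx₀_pos (fun y hy ↦ ?_)
    (fun y hy ↦ hdecr hy) hx
  have hy_pos : 0 < y := hx₀_pos.trans_le hy
  positivity

variable {E : Type*} [NormedAddCommGroup E] {Y : Ω → E}

lemma integrable_of_setLIntegral_tail_lt_top (hY : AEStronglyMeasurable Y μ) {x : ℝ}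
    (hx : ∫⁻ ω in {ω | x < ‖Y ω‖}, ENNReal.ofReal ‖Y ω‖ ∂μ < ⊤) : Integrable Y μ := by
  have hlarge : IntegrableOn Y {ω | x < ‖Y ω‖} μ :=
    ⟨hY.restrict, (hasFiniteIntegral_iff_norm Y).2 hx⟩
  have hsmall : IntegrableOn Y {ω | ‖Y ω‖ ≤ x} μ :=
    Measure.integrableOn_of_bounded (measure_ne_top _ _) hY
      (ae_restrict_mem₀ (nullMeasurableSet_le hY.norm.aemeasurable aemeasurable_const))
  rw [← integrableOn_univ]
  exact (hlarge.union hsmall).mono_set fun ω _ ↦ lt_or_ge x ‖Y ω‖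

end TruncatedMean

theorem stmt_8_general {Ω E : Type*} [MeasurableSpace Ω] [NormedAddCommGroup E] (μ : Measure Ω)
    [IsFiniteMeasure μ] (Y : Ω → E) (hY : AEStronglyMeasurable Y μ) {α C : ℝ} (hα : 1 < α)
    (hC : α / (α - 1) < C) (h : ℝ → ℝ)
    (hslow : ∀ l > 0, Tendsto (fun x ↦ h (l * x) / h x) atTop (𝓝 1))
    (htail : ∀ x > 0, μ.real {ω | x < ‖Y ω‖} = x ^ (-α) * h x) :
    Integrable Y μ ∧
    ∃ x₀ > 0, ∀ x > 0,
      ∫ ω in {ω | x < ‖Y ω‖}, ‖Y ω‖ ∂μ ≤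
        (if x ≤ x₀ then ∫ ω, ‖Y ω‖ ∂μ else 0) + C * x ^ (1 - α) * h x := by
  have hC_pos : 0 < C := (div_pos (by linarith) (sub_pos.2 hα)).trans hC
  have hh : IsRegularlyVarying h 0 := by simpa only [IsRegularlyVarying, Real.rpow_zero]
  have hT : IsRegularlyVarying (fun x ↦ μ.real {ω | x < ‖Y ω‖}) (-α) := by
    refine (add_zero (-α) ▸ hh.rpow_mul (-α)).congr' ?_
    filter_upwards [eventually_gt_atTop 0] with x hx using (htail x hx).symm
  obtain ⟨x₀, hx₀, hbound⟩ := (atTop_basis' 1).eventually_iff.1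
    (hT.eventually_setLIntegral_tail_le hα hC hY.norm.aemeasurable)
  have hint : Integrable Y μ :=
    integrable_of_setLIntegral_tail_lt_top hY
      ((hbound Set.self_mem_Ici).trans_lt ENNReal.ofReal_lt_top)
  refine ⟨hint, x₀, one_pos.trans_le hx₀, fun x hx ↦ ?_⟩
  have hmain : C * x ^ (1 - α) * h x = C * x * μ.real {ω | x < ‖Y ω‖} := by
    rw [htail x hx, sub_eq_add_neg, Real.rpow_add hx, Real.rpow_one]
    ring
  have hmain_nonneg : 0 ≤ C * x * μ.real {ω | x < ‖Y ω‖} := by positivity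
  rw [hmain]
  split_ifs with hxx₀
  · exact le_add_of_le_of_nonneg
      (setIntegral_le_integral hint.norm (ae_of_all _ fun _ ↦ norm_nonneg _)) hmain_nonneg
  · rw [zero_add, integral_eq_lintegral_of_nonneg_ae (ae_of_all _ fun _ ↦ norm_nonneg _)
      hY.norm.restrict]
    exact ENNReal.toReal_le_of_le_ofReal hmain_nonneg (hbound (not_le.1 hxx₀).le)

theorem stmt_8 {Ω : Type*} [MeasurableSpace Ω] (μ : Measure Ω) [IsProbabilityMeasure μ]
    (Y : Ω → ℝ) (hY : Measurable Y) (α : ℝ) (hα : 1 < α ∧ α < 2)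
    (h : ℝ → ℝ) (hpos : ∀ x > 0, 0 < h x)
    (hslow : ∀ l > 0, Tendsto (fun x => h (l * x) / h x) atTop (nhds 1))
    (htail : ∀ x > 0, (μ {ω | x < |Y ω|}).toReal = x ^ (-α) * h x) :
    Integrable Y μ ∧
    ∃ x₀ > 0, ∀ x > 0,
      ∫ ω in {ω | x < |Y ω|}, |Y ω| ∂μ ≤
        (if x ≤ x₀ then ∫ ω, |Y ω| ∂μ else 0) + (2 * α / (α - 1)) * x ^ (1 - α) * h x :=
  stmt_8_general μ Y hY.aestronglyMeasurable hα.1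
    (div_lt_div_of_pos_right (by linarith) (sub_pos.2 hα.1)) h hslow htail
end
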